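/- (Proposition 2.2.) For every ε ∈ (0,1): a triple (p,q,l) ∈ G × V × G solves the three-field problem if and only if l = 0, q ∈ A, and (p,q) solves the AP formulation. In particular the three-field problem admits a unique solution (p^ε, q^ε, 0) with (p^ε,q^ε) ∈ G × A the unique solution of the AP formulation. -/

import Mathlib

/-!
A null vector of a semidefinite form lies in its kernel, so `apar` vanishes against `G`. Testing the
second equation with the multiplier `lm ∈ G` and subtracting `ε` times the first one leaves
`c lm lm = 0`, hence `c lm = 0`, so `lm ∈ G ∩ A = 0`. Conversely, the first equation is what is
needed to extend the second one from `A` to `V = G ⊕ A`.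

For existence and uniqueness, the sum `u = p + q` of a solution with `lm = 0` is characterised by
`apar u ξ + ε * aperp u ξ = ε * ell ξ` for all `ξ`. This form is coercive, so Lax–Milgram gives a
unique `u`, and then `p = P u`, `q = u - P u`.
-/

/-- A continuous, symmetric, positive semidefinite bilinear form on a real
inner-product space. -/
def IsCSPForm {V : Type*} [NormedAddCommGroup V] [InnerProductSpace ℝ V]
    (a : V →ₗ[ℝ] V →ₗ[ℝ] ℝ) : Prop :=
  (∀ x y : V, a x y = a y x) ∧ (∀ x : V, 0 ≤ a x x) ∧
    (∃ C : ℝ, ∀ x y : V, |a x y| ≤ C * ‖x‖ * ‖y‖)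

/-- A null vector of a symmetric positive semidefinite form is in its kernel. -/
lemma IsCSPForm.apply_eq_zero {V : Type*} [NormedAddCommGroup V] [InnerProductSpace ℝ V]
    {a : V →ₗ[ℝ] V →ₗ[ℝ] ℝ} (ha : IsCSPForm a) {x : V} (hx : a x x = 0) (y : V) :
    a x y = 0 := by
  obtain ⟨hsymm, hpos, -⟩ := ha
  by_contra h
  -- `t ↦ a (y + t x) (y + t x) = a y y + 2 t (a x y)` is affine; this `t` gives it the value `-1`.
  have key := hpos (y + (-(a y y + 1) / (2 * a x y)) • x)
  simp only [map_add, map_smul, LinearMap.add_apply, LinearMap.smul_apply, smul_eq_mul, hx,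
    hsymm y x] at key
  have ht : -(a y y + 1) / (2 * a x y) * a x y = -(a y y + 1) / 2 := by field_simp
  rw [ht, mul_zero] at key
  linarith

/-- Lax–Milgram for the form `apar + ε * aperp`, which is coercive with constant `ε * α` because
`ε ≤ 1`. -/
lemma exists_solution_of_coercive
    {V : Type*} [NormedAddCommGroup V] [InnerProductSpace ℝ V] [CompleteSpace V]
    {apar aperp : V →ₗ[ℝ] V →ₗ[ℝ] ℝ} (hapar : IsCSPForm apar) (haperp : IsCSPForm aperp)
    {α : ℝ} (hα : 0 < α) (hcoer : ∀ φ : V, α * ‖φ‖ ^ 2 ≤ apar φ φ + aperp φ φ)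
    (ell : V →L[ℝ] ℝ) {ε : ℝ} (hε : ε ∈ Set.Ioo (0 : ℝ) 1) :
    ∃ u : V, ∀ ξ : V, apar u ξ + ε * aperp u ξ = ε * ell ξ := by
  obtain ⟨-, hpos, C₁, hC₁⟩ := hapar
  obtain ⟨-, -, C₂, hC₂⟩ := haperp
  let B : V →L[ℝ] V →L[ℝ] ℝ :=
    LinearMap.mkContinuous₂ apar C₁ hC₁ + ε • LinearMap.mkContinuous₂ aperp C₂ hC₂
  have hB : ∀ x y : V, B x y = apar x y + ε * aperp x y := fun x y => by simp [B]
  have coer : IsCoercive B := by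
    refine ⟨ε * α, mul_pos hε.1 hα, fun u => ?_⟩
    rw [hB]
    nlinarith [mul_le_mul_of_nonneg_left (hcoer u) hε.1.le,
      mul_nonneg (sub_nonneg.2 hε.2.le) (hpos u)]
  let f : V := (InnerProductSpace.toDual ℝ V).symm (ε • ell)
  refine ⟨coer.continuousLinearEquivOfBilin.symm f, fun ξ => ?_⟩
  have h := coer.continuousLinearEquivOfBilin_apply (coer.continuousLinearEquivOfBilin.symm f) ξ
  rw [ContinuousLinearEquiv.apply_symm_apply, hB] at h
  rw [← h, InnerProductSpace.toDual_symm_apply]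
  rfl

/-- Proposition 2.2: a triple (p,q,l) ∈ G × V × G solves the
three-field problem iff l = 0, q ∈ A, and (p,q) solves the AP formulation;
in particular the three-field problem has a unique solution. -/
theorem three_field_equivalence
    {V : Type*} [NormedAddCommGroup V] [InnerProductSpace ℝ V] [CompleteSpace V]
    (apar aperp c : V →ₗ[ℝ] V →ₗ[ℝ] ℝ)
    (hapar : IsCSPForm apar) (haperp : IsCSPForm aperp) (hc : IsCSPForm c)
    (α : ℝ) (hα : 0 < α)
    (hcoer : ∀ φ : V, α * ‖φ‖ ^ 2 ≤ apar φ φ + aperp φ φ)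
    -- Hypothesis B: bounded projection P onto G along A, V = G ⊕ A
    (P : V →L[ℝ] V)
    (hPG : ∀ φ : V, apar (P φ) (P φ) = 0)
    (hPA : ∀ φ : V, ∀ ψ : V, apar ψ ψ = 0 → c (φ - P φ) ψ = 0)
    (hPid : ∀ φ : V, apar φ φ = 0 → P φ = φ)
    (hPzero : ∀ φ : V, (∀ ψ : V, apar ψ ψ = 0 → c φ ψ = 0) → P φ = 0)
    (ell : V →L[ℝ] ℝ) (F₀ : ℝ) (hF₀ : 0 ≤ F₀)
    (hell : ∀ ψ : V, |ell ψ| ≤ F₀ * Real.sqrt (c ψ ψ))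
    (ε : ℝ) (hε : ε ∈ Set.Ioo (0 : ℝ) 1) :
    (∀ p q lm : V, apar p p = 0 → apar lm lm = 0 →
      (((∀ η : V, apar η η = 0 → aperp p η + aperp q η = ell η) ∧
        (∀ ξ : V, apar q ξ + ε * aperp q ξ + ε * aperp p ξ + c lm ξ = ε * ell ξ) ∧
        (∀ χ : V, apar χ χ = 0 → c q χ = 0))
       ↔ (lm = 0 ∧ (∀ ψ : V, apar ψ ψ = 0 → c q ψ = 0) ∧
          (∀ η : V, apar η η = 0 → aperp p η + aperp q η = ell η) ∧
          (∀ ξ : V, (∀ ψ : V, apar ψ ψ = 0 → c ξ ψ = 0) →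
            apar q ξ + ε * aperp q ξ + ε * aperp p ξ = ε * ell ξ)))) ∧
    (∃! s : V × V × V, apar s.1 s.1 = 0 ∧ apar s.2.2 s.2.2 = 0 ∧
      (∀ η : V, apar η η = 0 → aperp s.1 η + aperp s.2.1 η = ell η) ∧
      (∀ ξ : V, apar s.2.1 ξ + ε * aperp s.2.1 ξ + ε * aperp s.1 ξ
          + c s.2.2 ξ = ε * ell ξ) ∧
      (∀ χ : V, apar χ χ = 0 → c s.2.1 χ = 0)) := by
  have hε0 : ε ≠ 0 := hε.1.ne'
  have hpar : ∀ {x : V}, apar x x = 0 → ∀ y, apar x y = 0 := hapar.apply_eq_zero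
  have hpar' : ∀ {x : V}, apar x x = 0 → ∀ y, apar y x = 0 := fun hx y => by
    rw [hapar.1, hpar hx]
  have mult_zero : ∀ p q lm : V, apar lm lm = 0 →
      (∀ η : V, apar η η = 0 → aperp p η + aperp q η = ell η) →
      (∀ ξ : V, apar q ξ + ε * aperp q ξ + ε * aperp p ξ + c lm ξ = ε * ell ξ) → lm = 0 := by
    intro p q lm hl h1 h2
    have hcl : c lm lm = 0 := by
      have e := h2 lm
      rw [← h1 lm hl, hpar' hl] at e
      linarith
    rw [← hPid lm hl]
    exact hPzero lm fun ψ _ => hc.apply_eq_zero hcl ψ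
  refine ⟨fun p q lm hp hl => ⟨fun ⟨h1, h2, h3⟩ => ?_, fun ⟨h0, hA, h1, h2⟩ => ?_⟩, ?_⟩
  · have h0 := mult_zero p q lm hl h1 h2
    refine ⟨h0, h3, h1, fun ξ _ => ?_⟩
    simpa [h0] using h2 ξ
  · refine ⟨h1, fun ξ => ?_, hA⟩
    have e1 := h1 (P ξ) (hPG ξ)
    have e2 := h2 (ξ - P ξ) (hPA ξ)
    simp only [map_sub, hpar' (hPG ξ)] at e2
    simp only [h0, map_zero, LinearMap.zero_apply]
    linear_combination e2 + ε * e1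
  · obtain ⟨u, hu⟩ := exists_solution_of_coercive hapar haperp hα hcoer ell hε
    refine ⟨(P u, u - P u, 0), ⟨hPG u, by simp, fun η hη => ?_, fun ξ => ?_, hPA u⟩, ?_⟩
    · have e := hu η
      rw [hpar' hη, zero_add] at e
      simpa using mul_left_cancel₀ hε0 e
    · have e := hu ξ
      simp only [map_sub, map_zero, LinearMap.sub_apply, LinearMap.zero_apply, hpar (hPG u)]
      linear_combination e
    · rintro ⟨p, q, lm⟩ ⟨hp, hl, h1, h2, h3⟩
      dsimp only at hp hl h1 h2 h3
      obtain rfl := mult_zero p q lm hl h1 h2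
      -- `p + q` solves the problem characterising `u`, so their difference has zero energy.
      have hd : ∀ ξ, apar (p + q - u) ξ + ε * aperp (p + q - u) ξ = 0 := fun ξ => by
        have e2 := h2 ξ
        simp only [map_zero, LinearMap.zero_apply] at e2
        simp only [map_add, map_sub, LinearMap.add_apply, LinearMap.sub_apply, hpar hp]
        linear_combination e2 - hu ξ
      have hz : p + q - u = 0 := by
        have n1 := hapar.2.1 (p + q - u)
        have n2 := haperp.2.1 (p + q - u)
        have e := hd (p + q - u)
        have m2 : aperp (p + q - u) (p + q - u) = 0 := by
          have := mul_nonneg hε.1.le n2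
          exact (mul_eq_zero.1 (by linarith)).resolve_left hε0
        have m1 : apar (p + q - u) (p + q - u) = 0 := by
          rwa [m2, mul_zero, add_zero] at e
        have k := hcoer (p + q - u)
        rw [m1, m2] at k
        have : ‖p + q - u‖ ^ 2 ≤ 0 := by
          by_contra hcon
          nlinarith [mul_pos hα (not_le.1 hcon)]
        exact norm_eq_zero.1 (pow_eq_zero_iff two_ne_zero |>.1 (le_antisymm this (sq_nonneg _)))
      have hpq : u = p + q := (sub_eq_zero.1 hz).symm
      have hPu : P u = p := by rw [hpq, map_add, hPid p hp, hPzero q h3, add_zero]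
      simp only [hPu, Prod.mk.injEq, true_and, and_true]
      rw [hpq, add_sub_cancel_left]
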